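/- arXiv:0907.2093 — 2 statements merged into one kernel-verified Lean document; each statement's English description precedes it below -/
import Mathlib

section
/- Let m > 0 and c > 0 be real numbers, and let R̂ > 0 satisfy (R̂/m - 1)·e^{R̂/m} = 1/c. Define f(R) = R·e^{-R/m} / (c + e^{-R/m}) for R ≥ 0. Then f(R̂) = R̂ - m = (m/c)·e^{-R̂/m}, and f(R) ≤ R̂ - m for every R ≥ 0. -/
/-!
The critical-point equation is equivalent to `c (R̂ - m) = m e^{-R̂/m}`, which gives both closed
forms of `f R̂`. After clearing the denominator and substituting this, the bound `f R ≤ R̂ - m`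
reads `(t + 1) e^{-R/m} ≤ e^{-R̂/m}` with `t = (R - R̂)/m`. Since `e^{-R̂/m} = e^t e^{-R/m}`, this is
the tangent-line inequality `t + 1 ≤ e^t`.
-/

/-- Equation (max_1_bit): if `R̂` solves `(R̂/m - 1)·e^{R̂/m} = 1/c`, then the
one-bit throughput `f(R) = R·e^{-R/m}/(c + e^{-R/m})` attains its maximum
over `R ≥ 0` at `R̂`, with `f(R̂) = R̂ - m = (m/c)·e^{-R̂/m}`. -/
theorem oneBit_max_throughput (m c Rhat : ℝ) (hm : 0 < m) (hc : 0 < c)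
    (hRhat : 0 < Rhat) (heq : (Rhat / m - 1) * Real.exp (Rhat / m) = 1 / c)
    (f : ℝ → ℝ)
    (hf : ∀ R, f R = R * Real.exp (-(R / m)) / (c + Real.exp (-(R / m)))) :
    f Rhat = Rhat - m ∧
    f Rhat = (m / c) * Real.exp (-(Rhat / m)) ∧
    ∀ R : ℝ, 0 ≤ R → f R ≤ Rhat - m := by
  have key : c * (Rhat - m) = m * Real.exp (-(Rhat / m)) := by
    have hpos := Real.exp_pos (Rhat / m)
    rw [Real.exp_neg]
    field_simp at heq ⊢
    linarith
  have h1 : f Rhat = Rhat - m := by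
    have hpos := Real.exp_pos (-(Rhat / m))
    rw [hf, div_eq_iff (by positivity)]
    linear_combination -key
  refine ⟨h1, ?_, fun R _ => ?_⟩
  · rw [h1, div_mul_eq_mul_div, eq_div_iff hc.ne']
    linear_combination key
  · have hpos := Real.exp_pos (-(R / m))
    have hE : Real.exp (-(Rhat / m)) = Real.exp ((R - Rhat) / m) * Real.exp (-(R / m)) := by
      rw [← Real.exp_add]
      congr 1
      ring
    have htan : ((R - Rhat) / m + 1) * Real.exp (-(R / m)) ≤ Real.exp (-(Rhat / m)) := by
      rw [hE]
      exact mul_le_mul_of_nonneg_right (Real.add_one_le_exp _) hpos.le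
    have hscaled := mul_le_mul_of_nonneg_left htan hm.le
    have hclear : m * (((R - Rhat) / m + 1) * Real.exp (-(R / m)))
        = (R - Rhat + m) * Real.exp (-(R / m)) := by
      field_simp
    rw [hf, div_le_iff₀ (by positivity)]
    linarith
end

section
/- Let p_s ∈ (0,1) and τ ∈ (0,1) be real numbers with τ ≥ (1/2)·ln(1 + 1/p_s), and let R₁, E₂ be real numbers with R₁ ≥ E₂ > 0. Set R_e = E₂/(1 + 2τ) and γ_L = (1-τ)·R₁ / ((1-τ) + τ·(1 + 1/p_s)·e^{R₁/E₂}). Then for every real γ ≥ γ_L, one has (1-τ)·(R₁ - γ)·e^{-R₁/R_e} - γτ ≤ 0. -/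
/-!
Write `r = R₁ / E₂ ≥ 1`. Multiplying by `B = exp (R₁ / Re) = exp r * exp (2 τ r)` turns the claim into
`(1 - τ) R₁ ≤ γ ((1 - τ) + τ B)`. The overhead condition gives `1 + 1 / ps ≤ exp (2 τ) ≤ exp (2 τ r)`,
so `B` dominates the factor `(1 + 1 / ps) * exp r` in the denominator of `γL`, and the
claim follows from `γ ≥ γL ≥ 0`.
-/

/-- Negativity of the `x → 0` limit in Lemma 5(i): under the overhead
condition `τ ≥ (1/2)·ln(1 + 1/p_s)`, with `R₁ ≥ E₂ > 0`,
`R_e = E₂/(1+2τ)` and `γ_L` the lower throughput bound of Lemma 4, every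
`γ ≥ γ_L` satisfies `(1-τ)(R₁-γ)e^{-R₁/R_e} - γτ ≤ 0`. -/
theorem limit_at_zero_nonpos (ps τ R₁ E₂ Re γL : ℝ)
    (hps : ps ∈ Set.Ioo (0 : ℝ) 1) (hτ : τ ∈ Set.Ioo (0 : ℝ) 1)
    (hτ2 : (1 / 2) * Real.log (1 + 1 / ps) ≤ τ)
    (hE : 0 < E₂) (hRE : E₂ ≤ R₁)
    (hRe : Re = E₂ / (1 + 2 * τ))
    (hγL : γL = (1 - τ) * R₁ / ((1 - τ) + τ * (1 + 1 / ps) * Real.exp (R₁ / E₂))) :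
    ∀ γ : ℝ, γL ≤ γ → (1 - τ) * (R₁ - γ) * Real.exp (-(R₁ / Re)) - γ * τ ≤ 0 := by
  obtain ⟨hps0, -⟩ := hps
  obtain ⟨hτ0, hτ1⟩ := hτ
  intro γ hγ
  have hR : 0 < R₁ := hE.trans_le hRE
  have hr : 1 ≤ R₁ / E₂ := (one_le_div hE).2 hRE
  have hc : 0 < 1 + 1 / ps := by positivity
  have hsplit : R₁ / Re = 2 * τ * (R₁ / E₂) + R₁ / E₂ := by
    rw [hRe]
    field_simp
    ring
  have hcexp : 1 + 1 / ps ≤ Real.exp (2 * τ * (R₁ / E₂)) := by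
    rw [← Real.log_le_iff_le_exp hc]
    nlinarith
  have hAB : (1 + 1 / ps) * Real.exp (R₁ / E₂) ≤ Real.exp (R₁ / Re) := by
    rw [hsplit, Real.exp_add]
    gcongr
  have hτ' : 0 < 1 - τ := sub_pos.2 hτ1
  have hD : 0 < (1 - τ) + τ * (1 + 1 / ps) * Real.exp (R₁ / E₂) := by positivity
  have hγ0 : 0 ≤ γ := le_trans (by rw [hγL]; positivity) hγ
  have hmain : (1 - τ) * R₁ ≤ γ * ((1 - τ) + τ * (1 + 1 / ps) * Real.exp (R₁ / E₂)) := by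
    rwa [hγL, div_le_iff₀ hD] at hγ
  have hB : (1 - τ) * (R₁ - γ) ≤ γ * τ * Real.exp (R₁ / Re) := by
    have := mul_le_mul_of_nonneg_left hAB (mul_nonneg hγ0 hτ0.le)
    linarith
  rw [Real.exp_neg, ← div_eq_mul_inv, sub_nonpos, div_le_iff₀ (Real.exp_pos _)]
  exact hB
end
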